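/- For a finite solvable group G the following statements are equivalent: (1) G is an SST-group; (2) G is an NSST-group; (3) every subgroup of G is SS-permutable in G; (4) every subgroup of G is NSS-permutable in G; (5) every subgroup of G of prime power order is SS-permutable in G; (6) every subgroup of G of prime power order is NSS-permutable in G; (7) every cyclic subgroup of G of prime power order is SS-permutable in G; (8) every cyclic subgroup of G of prime power order is NSS-permutable in G. -/

import Mathlib

open scoped Pointwise

section Defs

variable {G : Type*} [Group G]

/-- `K` is an SS-permutable supplement of `H` in `G`: `HK = G` and `H` permutes with
every Sylow subgroup of `K`. -/
def IsSSSupplement (H K : Subgroup G) : Prop :=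
  (H : Set G) * (K : Set G) = Set.univ ∧
    ∀ (p : ℕ) [Fact p.Prime] (P : Sylow p K),
      (H : Set G) * ((P.toSubgroup.map K.subtype : Subgroup G) : Set G) =
        ((P.toSubgroup.map K.subtype : Subgroup G) : Set G) * (H : Set G)

/-- `H` is SS-permutable in `G`: `H` has a supplement `K` such that `H` permutes with
every Sylow subgroup of `K`. -/
def IsSSPermutable (H : Subgroup G) : Prop :=
  ∃ K : Subgroup G, IsSSSupplement H K

/-- `H` is NSS-permutable in `G`: `H` has a normal supplement `K` such that `H` permutes
with every Sylow subgroup of `K`. -/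
def IsNSSPermutable (H : Subgroup G) : Prop :=
  ∃ K : Subgroup G, K.Normal ∧ IsSSSupplement H K

/-- `H` is S-permutable in `G`: it permutes with every Sylow subgroup of `G`. -/
def IsSPermutable (H : Subgroup G) : Prop :=
  ∀ (p : ℕ) [Fact p.Prime] (P : Sylow p G),
    (H : Set G) * ((P : Subgroup G) : Set G) = ((P : Subgroup G) : Set G) * (H : Set G)

/-- `H` is semipermutable in `G`: `HX = XH` for every subgroup `X` with `gcd(|H|,|X|) = 1`. -/
def IsSemipermutable (H : Subgroup G) : Prop :=
  ∀ X : Subgroup G, Nat.Coprime (Nat.card H) (Nat.card X) →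
    (H : Set G) * (X : Set G) = (X : Set G) * (H : Set G)

/-- `H` is S-semipermutable in `G`: `HQ = QH` for every Sylow `q`-subgroup `Q` of `G`
with `q` a prime not dividing `|H|`. -/
def IsSSemipermutable (H : Subgroup G) : Prop :=
  ∀ (q : ℕ) [Fact q.Prime], ¬ q ∣ Nat.card H → ∀ Q : Sylow q G,
    (H : Set G) * ((Q : Subgroup G) : Set G) = ((Q : Subgroup G) : Set G) * (H : Set G)

end Defs

/-- `G` is an SST-group: SS-permutability is a transitive relation. -/
def IsSSTGroup (G : Type*) [Group G] : Prop :=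
  ∀ H K : Subgroup G, H ≤ K → IsSSPermutable (H.subgroupOf K) → IsSSPermutable K →
    IsSSPermutable H

/-- `G` is an NSST-group: NSS-permutability is a transitive relation. -/
def IsNSSTGroup (G : Type*) [Group G] : Prop :=
  ∀ H K : Subgroup G, H ≤ K → IsNSSPermutable (H.subgroupOf K) → IsNSSPermutable K →
    IsNSSPermutable H

/-- `G` is a PST-group: S-permutability is a transitive relation. -/
def IsPSTGroup (G : Type*) [Group G] : Prop :=
  ∀ H K : Subgroup G, H ≤ K → IsSPermutable (H.subgroupOf K) → IsSPermutable K →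
    IsSPermutable H

/-- `G` is a BT-group: semipermutability is a transitive relation. -/
def IsBTGroup (G : Type*) [Group G] : Prop :=
  ∀ H K : Subgroup G, H ≤ K → IsSemipermutable (H.subgroupOf K) → IsSemipermutable K →
    IsSemipermutable H

/-!
If (N)SS-permutability is transitive, every subgroup is (N)SS-permutable by descent along maximal
subgroups: in a solvable group a maximal subgroup `M` is supplemented by a term `A` of the derived
series with `A ≰ M` and `[A, A] ≤ M`, and `M` permutes with all Sylow subgroups of `A`.

Conversely, suppose that every cyclic primary subgroup is SS-permutable. Then for each prime `p`
some normal subgroup `K p` of index `1` or `p` has all its `p`-elements in `O_p(G)`. By induction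
one may assume `O_p(G) = 1`, so that `G` has a normal subgroup `N` of prime order `q ≠ p`.
If `O_p(G/N)` contains the image of an element `x` of order `p`, then the centralizer `C` of `N`
has no element of order `p`: if `w` were one, the Sylow `p`-subgroups of an SS-supplement of
`⟨xw⟩` would all lie in `C` and contain `w`, putting `w` in `O_p(G) = 1`. Applied to `⟨x⟩`, the
same argument shows that the image of a Sylow `p`-subgroup in the abelian group
`G/C ≤ Aut N` has order `p`, so that a normal `p`-complement of `G/C` gives `K p`. If there is no
such `x`, every `p`-element whose image lies in `O_p(G/N)` is trivial and `K p` is lifted from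
`G/N`.

The intersection of those `K p` that do not contain a given subgroup `H` is then a normal
SS-supplement of `H`.
-/

theorem map_conj_smul {G G' : Type*} [Group G] [Group G'] (f : G →* G') (g : G)
    (S : Subgroup G) : (MulAut.conj g • S).map f = MulAut.conj (f g) • S.map f := by
  refine SetLike.coe_injective ?_
  change f '' ((MulAut.conj g • ·) '' (S : Set G)) = (MulAut.conj (f g) • ·) '' (f '' (S : Set G))
  simp only [Set.image_image, MulAut.smul_def, MulAut.conj_apply, map_mul, map_inv]

section Commute

variable {G : Type*} [Group G] {A B : Subgroup G}

theorem commute_of_forall_mul_mem (h : ∀ a ∈ A, ∀ b ∈ B, a * b ∈ (B : Set G) * (A : Set G)) :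
    Commute (A : Set G) (B : Set G) := by
  have hAB : (A : Set G) * (B : Set G) ⊆ (B : Set G) * (A : Set G) := Set.mul_subset_iff.2 h
  refine hAB.antisymm ?_
  rw [← Set.inv_subset_inv]
  simpa only [mul_inv_rev, inv_coe_set] using hAB

theorem commute_of_le (h : A ≤ B) : Commute (A : Set G) (B : Set G) :=
  commute_of_forall_mul_mem fun a ha b hb => ⟨a * b, B.mul_mem (h ha) hb, 1, A.one_mem, mul_one _⟩

theorem commute_of_mul_eq_univ (h : (A : Set G) * (B : Set G) = Set.univ) :
    Commute (A : Set G) (B : Set G) := by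
  have hBA : (B : Set G) * (A : Set G) = Set.univ := by
    rw [← Set.inv_univ, ← h, mul_inv_rev, inv_coe_set, inv_coe_set]
  exact h.trans hBA.symm

theorem commute_conj_smul (h : Commute (A : Set G) (B : Set G)) {a : G} (ha : a ∈ A) :
    Commute (A : Set G) ((MulAut.conj a • B : Subgroup G) : Set G) := by
  have hsmul := congrArg (MulAut.conj a • ·) h.eq
  simp only [smul_mul', ← Subgroup.coe_pointwise_smul, Subgroup.conj_smul_eq_self_of_mem ha]
    at hsmul
  exact hsmul

theorem commute_iSup {ι : Sort*} {A : ι → Subgroup G}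
    (h : ∀ i, Commute (A i : Set G) (B : Set G)) :
    Commute ((⨆ i, A i : Subgroup G) : Set G) (B : Set G) := by
  refine commute_of_forall_mul_mem fun a ha => ?_
  induction ha using Subgroup.iSup_induction' with
  | h1 => exact fun b hb => ⟨b, hb, 1, one_mem _, by simp only [mul_one, one_mul]⟩
  | hp i x hx =>
    intro b hb
    have hxb : x * b ∈ (B : Set G) * (A i : Set G) := (h i).eq ▸ Set.mul_mem_mul hx hb
    exact Set.mul_subset_mul_left (SetLike.coe_subset_coe.2 (le_iSup A i)) hxb
  | hmul x y _ _ hx hy =>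
    intro b hb
    obtain ⟨b₁, hb₁, y', hy', hyb : b₁ * y' = y * b⟩ := hy b hb
    obtain ⟨b₂, hb₂, x', hx', hxb : b₂ * x' = x * b₁⟩ := hx b₁ hb₁
    refine ⟨b₂, hb₂, x' * y', mul_mem hx' hy', ?_⟩
    change b₂ * (x' * y') = x * y * b
    rw [← mul_assoc, hxb, mul_assoc, hyb, mul_assoc]

theorem coe_sup_of_commute (h : Commute (A : Set G) (B : Set G)) :
    ((A ⊔ B : Subgroup G) : Set G) = (A : Set G) * (B : Set G) := by
  refine Set.Subset.antisymm ?_ (Set.mul_subset_iff.2 fun a ha b hb => Subgroup.mul_mem_sup ha hb)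
  intro x hx
  rw [SetLike.mem_coe, Subgroup.sup_eq_closure_mul] at hx
  induction hx using Subgroup.closure_induction with
  | mem _ hx => exact hx
  | one => exact ⟨1, A.one_mem, 1, B.one_mem, mul_one 1⟩
  | mul x y _ _ hx hy =>
    have hxy := Set.mul_mem_mul hx hy
    rwa [Commute.mul_mul_mul_comm h.symm, coe_mul_coe, coe_mul_coe] at hxy
  | inv x _ hx =>
    rw [h.eq]
    simpa only [mul_inv_rev, inv_coe_set] using Set.inv_mem_inv.2 hx

theorem relIndex_sup_of_commute (h : Commute (A : Set G) (B : Set G)) :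
    B.relIndex (A ⊔ B) = B.relIndex A := by
  let e := Subgroup.quotientSubgroupOfEmbeddingOfLE B (le_sup_left (a := A) (b := B))
  refine (Nat.card_congr (Equiv.ofBijective e ⟨e.injective, fun w => ?_⟩)).symm
  induction w using QuotientGroup.induction_on with
  | H w =>
    obtain ⟨a, ha, b, hb, hab⟩ := (coe_sup_of_commute h).le w.2
    refine ⟨((⟨a, ha⟩ : A) : A ⧸ B.subgroupOf A), QuotientGroup.eq.2 ?_⟩
    rw [Subgroup.mem_subgroupOf]
    simpa [← hab] using hb

theorem card_sup_dvd_of_commute (h : Commute (A : Set G) (B : Set G)) :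
    Nat.card (A ⊔ B : Subgroup G) ∣ Nat.card A * Nat.card B := by
  rw [← Subgroup.relIndex_bot_left (A ⊔ B),
    ← Subgroup.relIndex_mul_relIndex ⊥ B _ bot_le le_sup_right, relIndex_sup_of_commute h,
    Subgroup.relIndex_bot_left, mul_comm]
  exact mul_dvd_mul_right (Subgroup.relIndex_dvd_card B A) _

theorem isPGroup_sup_of_commute [Finite G] {p : ℕ} [Fact p.Prime] (hA : IsPGroup p A)
    (hB : IsPGroup p B) (h : Commute (A : Set G) (B : Set G)) :
    IsPGroup p (A ⊔ B : Subgroup G) := by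
  obtain ⟨m, hm⟩ := IsPGroup.iff_card.1 hA
  obtain ⟨n, hn⟩ := IsPGroup.iff_card.1 hB
  refine IsPGroup.of_card_dvd_pow (n := m + n) ?_
  rw [pow_add, ← hm, ← hn]
  exact card_sup_dvd_of_commute h

theorem index_dvd_card_of_mul_eq_univ (h : (A : Set G) * (B : Set G) = Set.univ) :
    B.index ∣ Nat.card A := by
  have hAB := commute_of_mul_eq_univ h
  have htop : A ⊔ B = ⊤ := by
    rw [← SetLike.coe_set_eq, coe_sup_of_commute hAB, h, Subgroup.coe_top]
  rw [← Subgroup.relIndex_top_right, ← htop, relIndex_sup_of_commute hAB]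
  exact Subgroup.relIndex_dvd_card B A

theorem left_le_of_coe_eq_mul {C : Subgroup G} (h : (C : Set G) = (A : Set G) * (B : Set G)) :
    A ≤ C := fun a ha =>
  h.ge ⟨a, ha, 1, B.one_mem, mul_one a⟩

theorem right_le_of_coe_eq_mul {C : Subgroup G} (h : (C : Set G) = (A : Set G) * (B : Set G)) :
    B ≤ C := fun b hb =>
  h.ge ⟨1, A.one_mem, b, hb, one_mul b⟩

end Commute

/-- `x` is a `p`-element: its order is a power of `p`. -/
def IsPElement {G : Type*} [Group G] (p : ℕ) (x : G) : Prop :=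
  ∃ k : ℕ, x ^ p ^ k = 1

theorem isPElement_of_mem_isPGroup {G : Type*} [Group G] {p : ℕ} {S : Subgroup G}
    (hS : IsPGroup p S) {x : G} (hx : x ∈ S) : IsPElement p x := by
  obtain ⟨k, hk⟩ := hS ⟨x, hx⟩
  exact ⟨k, congrArg Subtype.val hk⟩

theorem isPElement_of_pow_eq_one {G : Type*} [Group G] {p : ℕ} {x : G} (hx : x ^ p = 1) :
    IsPElement p x :=
  ⟨1, by rwa [pow_one]⟩

namespace IsPElement

variable {G : Type*} [Group G] {p q : ℕ} {x y : G}

theorem isPGroup_zpowers (hx : IsPElement p x) : IsPGroup p (Subgroup.zpowers x) := by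
  obtain ⟨k, hk⟩ := hx
  exact IsPGroup.of_card_dvd_pow (Nat.card_zpowers x ▸ orderOf_dvd_of_pow_eq_one hk)

theorem of_mem_zpowers (hx : IsPElement p x) (hy : y ∈ Subgroup.zpowers x) : IsPElement p y :=
  isPElement_of_mem_isPGroup hx.isPGroup_zpowers hy

theorem map {G' : Type*} [Group G'] (hx : IsPElement p x) (f : G →* G') :
    IsPElement p (f x) := by
  obtain ⟨k, hk⟩ := hx
  exact ⟨k, by rw [← map_pow, hk, map_one]⟩

theorem mul_of_commute (hx : IsPElement p x) (hy : IsPElement p y) (hxy : Commute x y) :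
    IsPElement p (x * y) := by
  obtain ⟨k, hk⟩ := hx
  obtain ⟨m, hm⟩ := hy
  exact ⟨k + m, by rw [hxy.mul_pow, pow_add, pow_mul, hk, one_pow, pow_mul', hm, one_pow, one_mul]⟩

theorem eq_one [Fact p.Prime] [Fact q.Prime] (hpq : p ≠ q) (hx : IsPElement p x)
    (hx' : IsPElement q x) : x = 1 :=
  Subgroup.disjoint_def.1
    (IsPGroup.disjoint_of_ne p q hpq _ _ hx.isPGroup_zpowers hx'.isPGroup_zpowers)
    (Subgroup.mem_zpowers x) (Subgroup.mem_zpowers x)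

theorem exists_mem_zpowers_map_eq [Finite G] [hp : Fact p.Prime] {G' : Type*} [Group G']
    {f : G →* G'} {g : G} (hg : IsPElement p (f g)) :
    ∃ x ∈ Subgroup.zpowers g, f x = f g ∧ IsPElement p x := by
  obtain ⟨k, hk⟩ := hg
  obtain ⟨n, m, hm, hnm⟩ :=
    Nat.exists_eq_pow_mul_and_not_dvd (orderOf_pos g).ne' p hp.out.ne_one
  have hcoprime : m.Coprime (orderOf (f g)) :=
    ((hp.out.coprime_iff_not_dvd.2 hm).pow_left k).symm.coprime_dvd_right
      (orderOf_dvd_of_pow_eq_one hk)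
  obtain ⟨u, hu⟩ := exists_pow_eq_self_of_coprime hcoprime
  refine ⟨(g ^ m) ^ u, pow_mem (Subgroup.npow_mem_zpowers g m) u, by rwa [map_pow, map_pow], n, ?_⟩
  rw [pow_right_comm, ← pow_mul g, mul_comm m, ← hnm, pow_orderOf_eq_one, one_pow]

theorem exists_mem_zpowers_orderOf_eq [Finite G] [Fact p.Prime] (hx : IsPElement p x)
    (hx1 : x ≠ 1) : ∃ y ∈ Subgroup.zpowers x, orderOf y = p := by
  have hp : p ∣ Nat.card (Subgroup.zpowers x) :=
    hx.isPGroup_zpowers.card_eq_or_dvd.resolve_left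
      (mt Subgroup.card_eq_one.1 (mt Subgroup.zpowers_eq_bot.1 hx1))
  obtain ⟨y, hy⟩ := exists_prime_orderOf_dvd_card' p hp
  exact ⟨y, y.2, by rw [Subgroup.orderOf_coe, hy]⟩

theorem mem_of_index_dvd [Fact p.Prime] [Fact q.Prime] (hpq : p ≠ q) (hx : IsPElement p x)
    {K : Subgroup G} [K.Normal] (hK : K.index ∣ q) : x ∈ K := by
  refine (QuotientGroup.eq_one_iff x).1 (eq_one hpq (hx.map (QuotientGroup.mk' K)) ?_)
  obtain ⟨c, rfl⟩ := hK
  exact isPElement_of_pow_eq_one (by rw [pow_mul, Subgroup.index, pow_card_eq_one', one_pow])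

end IsPElement

section PElements

variable {G : Type*} [Group G] [Finite G] {p : ℕ} {H K : Subgroup G}

theorem eq_top_of_forall_exists_sylow_le
    (h : ∀ (p : ℕ) [Fact p.Prime], ∃ P : Sylow p G, (P : Subgroup G) ≤ H) : H = ⊤ := by
  refine Subgroup.index_eq_one.1 (Nat.eq_one_iff_not_exists_prime_dvd.2 fun p hp hdvd => ?_)
  have : Fact p.Prime := ⟨hp⟩
  obtain ⟨P, hP⟩ := h p
  exact P.not_dvd_index (hdvd.trans (Subgroup.index_dvd_of_le hP))

theorem le_of_forall_isPElement_mem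
    (h : ∀ (p : ℕ) [Fact p.Prime], ∀ x ∈ H, IsPElement p x → x ∈ K) : H ≤ K := by
  rw [← Subgroup.subgroupOf_eq_top]
  refine eq_top_of_forall_exists_sylow_le fun p _ => ?_
  obtain ⟨P⟩ : Nonempty (Sylow p H) := inferInstance
  exact ⟨P, fun x hx => h p x x.2 ((isPElement_of_mem_isPGroup P.2 hx).map H.subtype)⟩

theorem exists_isPElement_mem_notMem [Fact p.Prime] [K.Normal] (hK : K.index ∣ p)
    (hHK : ¬ H ≤ K) : ∃ x ∈ H, IsPElement p x ∧ x ∉ K := by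
  by_contra! hp
  refine hHK (le_of_forall_isPElement_mem fun q _ x hxH hx => ?_)
  rcases eq_or_ne q p with rfl | hqp
  · exact hp x hxH hx
  · exact hx.mem_of_index_dvd hqp hK

theorem commute_of_forall_isPElement
    (h : ∀ (p : ℕ) [Fact p.Prime], ∀ x ∈ H, IsPElement p x →
      Commute (Subgroup.zpowers x : Set G) (K : Set G)) : Commute (H : Set G) (K : Set G) := by
  have hH : H = ⨆ x : {x : G // x ∈ H ∧ ∃ p : ℕ, p.Prime ∧ IsPElement p x},
      Subgroup.zpowers (x : G) := by
    refine le_antisymm (le_of_forall_isPElement_mem fun p hp x hxH hx => ?_)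
      (iSup_le fun x => Subgroup.zpowers_le.2 x.2.1)
    exact Subgroup.mem_iSup_of_mem ⟨x, hxH, p, hp.out, hx⟩ (Subgroup.mem_zpowers x)
  rw [hH]
  refine commute_iSup fun ⟨x, hxH, p, hp, hx⟩ => ?_
  have : Fact p.Prime := ⟨hp⟩
  exact h p x hxH hx

end PElements

/-- The `p`-core `O_p(G)`: the largest normal `p`-subgroup of `G`. -/
def pCore (p : ℕ) (G : Type*) [Group G] : Subgroup G :=
  sSup {V | V.Normal ∧ IsPGroup p V}

section PCore

variable {G : Type*} [Group G] {p : ℕ}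

instance pCore_normal : (pCore p G).Normal :=
  Subgroup.sSup_normal _ fun _ hV => hV.1

theorem le_pCore {V : Subgroup G} [V.Normal] (hV : IsPGroup p V) : V ≤ pCore p G :=
  le_sSup ⟨inferInstance, hV⟩

theorem isPGroup_pCore : IsPGroup p (pCore p G) :=
  Sylow.sSup_of_normal _ (fun _ hV => hV.2) fun _ hV => hV.1

theorem comap_pCore_quotient_le {V : Subgroup G} [V.Normal] (hV : IsPGroup p V) :
    (pCore p (G ⧸ V)).comap (QuotientGroup.mk' V) ≤ pCore p G :=
  le_pCore (isPGroup_pCore.comap_of_ker_isPGroup _ ((QuotientGroup.ker_mk' V).symm ▸ hV))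

variable [Finite G] [Fact p.Prime]

theorem mem_pCore_of_mem_isNilpotent {U : Subgroup G} [U.Normal] [Group.IsNilpotent U] {x : G}
    (hxU : x ∈ U) (hx : IsPElement p x) : x ∈ pCore p G := by
  have hx' : IsPElement p (⟨x, hxU⟩ : U) := hx.imp fun _ hk => Subtype.ext hk
  obtain ⟨Y, hY⟩ := hx'.isPGroup_zpowers.exists_le_sylow
  have hYn : Y.Normal :=
    ((Group.isNilpotent_of_finite_tfae (G := U)).out 0 3 rfl rfl).1 inferInstance p inferInstance Y
  have := Y.characteristic_of_normal hYn
  have : (Y.map U.subtype).Normal := ConjAct.normal_of_characteristic_of_normal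
  exact le_pCore (Y.2.map U.subtype) ⟨⟨x, hxU⟩, hY (Subgroup.mem_zpowers _), rfl⟩

section Centralizer

open scoped commutatorElement

variable {N : Subgroup G} [N.Normal] {x : G}

theorem mem_pCore_of_mem_centralizer (hx : IsPElement p x)
    (hxC : x ∈ Subgroup.centralizer (N : Set G)) (hxN : (x : G ⧸ N) ∈ pCore p (G ⧸ N)) :
    x ∈ pCore p G := by
  let U := (pCore p (G ⧸ N)).comap (QuotientGroup.mk' N) ⊓ Subgroup.centralizer (N : Set G)
  let f : U →* pCore p (G ⧸ N) :=
    ((QuotientGroup.mk' N).comp U.subtype).codRestrict _ fun u => u.2.1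
  have hker : f.ker ≤ Subgroup.center U := fun n hn => by
    have hnN : (n : G) ∈ N := (QuotientGroup.eq_one_iff (n : G)).1 (congrArg Subtype.val hn)
    exact Subgroup.mem_center_iff.2 fun u =>
      Subtype.ext (Subgroup.mem_centralizer_iff.1 u.2.2 n hnN).symm
  have : Group.IsNilpotent (pCore p (G ⧸ N)) := isPGroup_pCore.isNilpotent
  have : Group.IsNilpotent U := Subgroup.isNilpotent_of_ker_le_center f hker
  exact mem_pCore_of_mem_isNilpotent (U := U) ⟨hxN, hxC⟩ hx

theorem mem_of_mem_centralizer_of_pCore_eq_bot (hG : pCore p G = ⊥)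
    (hxC : x ∈ Subgroup.centralizer (N : Set G)) (hxN : (x : G ⧸ N) ∈ pCore p (G ⧸ N)) :
    x ∈ N := by
  obtain ⟨y, hyx, hxy, hy⟩ := (isPElement_of_mem_isPGroup isPGroup_pCore hxN :
    IsPElement p (QuotientGroup.mk' N x)).exists_mem_zpowers_map_eq
  have hyC := Subgroup.zpowers_le.2 hxC hyx
  have hyG := mem_pCore_of_mem_centralizer hy hyC (hxy.symm ▸ hxN : QuotientGroup.mk' N y ∈ _)
  rw [hG, Subgroup.mem_bot] at hyG
  rw [← QuotientGroup.eq_one_iff, ← QuotientGroup.mk'_apply, ← hxy, hyG, map_one]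

theorem commute_of_mem_centralizer {q : ℕ} [Fact q.Prime] (hpq : p ≠ q) (hG : pCore p G = ⊥)
    (hN : IsPGroup q N) (hxN : (x : G ⧸ N) ∈ pCore p (G ⧸ N)) {s : G} (hs : IsPElement p s)
    (hsC : s ∈ Subgroup.centralizer (N : Set G)) : Commute x s := by
  have hC : (Subgroup.centralizer (N : Set G)).Normal := inferInstance
  have hcommN : ⁅x, s⁆ ∈ N := by
    refine mem_of_mem_centralizer_of_pCore_eq_bot hG
      (mul_mem (hC.conj_mem s hsC x) (inv_mem hsC)) ?_
    rw [commutatorElement_def, mul_assoc, mul_assoc, ← mul_assoc s]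
    exact mul_mem hxN (pCore_normal.conj_mem _ (inv_mem hxN) (s : G ⧸ N))
  have hcomm : Commute ⁅x, s⁆ s := Subgroup.mem_centralizer_iff.1 hsC _ hcommN
  have hconj : Commute (x * s * x⁻¹) s := by
    have := hcomm.mul_left (Commute.refl s)
    rwa [commutatorElement_def, inv_mul_cancel_right] at this
  refine commutatorElement_eq_one_iff_commute.1 (IsPElement.eq_one hpq ?_
    (isPElement_of_mem_isPGroup hN hcommN))
  exact (hs.map (MulAut.conj x).toMonoidHom).mul_of_commute
    (hs.of_mem_zpowers (inv_mem (Subgroup.mem_zpowers s))) hconj.inv_right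

end Centralizer

end PCore

section Solvable

variable {G : Type*} [Group G] [Group.IsSolvable G]

theorem exists_derivedSeries_not_le {M : Subgroup G} (hM : M ≠ ⊤) :
    ∃ n, ¬ derivedSeries G n ≤ M ∧ derivedSeries G (n + 1) ≤ M := by
  by_contra! hstep
  have hnot : ∀ n, ¬ derivedSeries G n ≤ M := fun n => by
    induction n with
    | zero => rwa [derivedSeries_zero, top_le_iff]
    | succ n ih => exact hstep n ih
  obtain ⟨k, hk⟩ := Group.IsSolvable.solvable (G := G)
  exact hnot k (hk ▸ bot_le)

open scoped IsMulCommutative in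
theorem exists_pCore_ne_bot [Finite G] [Nontrivial G] :
    ∃ q : ℕ, q.Prime ∧ pCore q G ≠ ⊥ := by
  obtain ⟨n, hn, hcomm⟩ := exists_derivedSeries_not_le (bot_ne_top (α := Subgroup G))
  rw [derivedSeries_succ, le_bot_iff, Subgroup.commutator_eq_bot_iff_le_centralizer] at hcomm
  have : IsMulCommutative (derivedSeries G n) :=
    Subgroup.le_centralizer_iff_isMulCommutative.1 hcomm
  have : Group.IsNilpotent (derivedSeries G n) := inferInstance
  obtain ⟨q, hq, hdvd⟩ := Nat.exists_prime_and_dvd (mt Subgroup.card_eq_one.1 (mt Eq.le hn))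
  have : Fact q.Prime := ⟨hq⟩
  obtain ⟨a, ha⟩ := exists_prime_orderOf_dvd_card' q hdvd
  have haq : IsPElement q (a : G) :=
    isPElement_of_pow_eq_one (by rw [← ha, ← Subgroup.orderOf_coe, pow_orderOf_eq_one])
  have haG : (a : G) ∈ pCore q G := mem_pCore_of_mem_isNilpotent a.2 haq
  refine ⟨q, hq, fun h => hq.ne_one ?_⟩
  rw [h, Subgroup.mem_bot] at haG
  rw [← ha, ← Subgroup.orderOf_coe, haG, orderOf_one]

end Solvable

section MaximalSubgroups

variable {G : Type*} [Group G]

theorem IsSSSupplement.of_commutator_le [Finite G] {M A : Subgroup G} [A.Normal]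
    (hMA : M ⊔ A = ⊤) (hA : ⁅A, A⁆ ≤ M) : IsSSSupplement M A := by
  refine ⟨by rw [← Subgroup.mul_normal M A, hMA, Subgroup.coe_top], fun q _ Q => ?_⟩
  refine commute_of_forall_mul_mem ?_
  rintro m hm _ ⟨x, hx, rfl⟩
  obtain ⟨a, ha⟩ := MulAction.exists_smul_eq A Q (MulAut.conjNormal (H := A) m • Q)
  obtain ⟨y, hy, hyx⟩ : MulAut.conjNormal (H := A) m x ∈ a • Q := ha ▸ ⟨x, hx, rfl⟩
  have hconj : (a : G) * y * (a : G)⁻¹ = m * x * m⁻¹ := by simpa using congrArg Subtype.val hyx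
  have hcomm : (y : G)⁻¹ * a * y * (a : G)⁻¹ ∈ M := by
    simpa only [commutatorElement_def, inv_inv] using
      hA (Subgroup.commutator_mem_commutator (inv_mem y.2) a.2)
  refine ⟨y, ⟨y, hy, rfl⟩, _, mul_mem hcomm hm, ?_⟩
  calc (y : G) * ((y : G)⁻¹ * a * y * (a : G)⁻¹ * m) = a * y * (a : G)⁻¹ * m := by group
    _ = m * x := by rw [hconj, inv_mul_cancel_right]

theorem IsNSSPermutable.isSSPermutable {H : Subgroup G} (h : IsNSSPermutable H) :
    IsSSPermutable H :=
  let ⟨K, _, hK⟩ := h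
  ⟨K, hK⟩

theorem IsNSSPermutable.top : IsNSSPermutable (⊤ : Subgroup G) :=
  ⟨⊤, inferInstance, by simp, fun p _ P => commute_of_le le_top |>.symm⟩

theorem IsNSSPermutable.of_isCoatom [Finite G] [Group.IsSolvable G] {M : Subgroup G}
    (hM : IsCoatom M) : IsNSSPermutable M := by
  obtain ⟨n, hn, hn'⟩ := exists_derivedSeries_not_le hM.1
  rw [derivedSeries_succ] at hn'
  exact ⟨_, inferInstance, .of_commutator_le (hM.2 _ (left_lt_sup.2 hn)) hn'⟩

theorem isCoatom_subgroupOf_of_covBy {H K : Subgroup G} (h : H ⋖ K) :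
    IsCoatom (H.subgroupOf K) := by
  let e : Subgroup K ≃o Set.Iic K := Subgroup.MapSubtype.orderIso K
  have he : e (H.subgroupOf K) = ⟨H, h.le⟩ := Subtype.ext (Subgroup.map_subgroupOf_eq_of_le h.le)
  rw [← e.isCoatom_iff, he]
  exact (covBy_iff_coatom_Iic h.le).1 h

theorem forall_of_covBy {α : Type*} [PartialOrder α] [OrderTop α] [IsStronglyAtomic α]
    [WellFoundedGT α] {C : α → Prop} (top : C ⊤) (step : ∀ a b, a ⋖ b → C b → C a) (a : α) :
    C a := by
  induction a using WellFoundedGT.induction with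
  | ind a ih =>
    rcases eq_or_ne a ⊤ with rfl | ha
    · exact top
    · obtain ⟨b, hab, -⟩ := exists_covBy_le_of_lt ha.lt_top
      exact step a b hab (ih b hab.lt)

theorem IsSSTGroup.isSSPermutable [Finite G] [Group.IsSolvable G] (h : IsSSTGroup G)
    (H : Subgroup G) : IsSSPermutable H :=
  forall_of_covBy IsNSSPermutable.top.isSSPermutable
    (fun A B hAB hB => h A B hAB.le
      (IsNSSPermutable.of_isCoatom (isCoatom_subgroupOf_of_covBy hAB)).isSSPermutable hB) H

theorem IsNSSTGroup.isNSSPermutable [Finite G] [Group.IsSolvable G] (h : IsNSSTGroup G)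
    (H : Subgroup G) : IsNSSPermutable H :=
  forall_of_covBy IsNSSPermutable.top
    (fun A B hAB hB => h A B hAB.le (.of_isCoatom (isCoatom_subgroupOf_of_covBy hAB)) hB) H

end MaximalSubgroups

namespace IsSSSupplement

variable {G : Type*} [Group G] {H K : Subgroup G} {p : ℕ}

theorem exists_conj_smul_eq (h : IsSSSupplement H K) (P : Sylow p K) (g : G) :
    ∃ a ∈ H, ∃ P' : Sylow p K,
      MulAut.conj g • P.toSubgroup.map K.subtype = MulAut.conj a • P'.toSubgroup.map K.subtype := by
  obtain ⟨a, ha, k, hk, rfl⟩ := h.1.ge (Set.mem_univ g)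
  refine ⟨a, ha, (⟨k, hk⟩ : K) • P, ?_⟩
  rw [map_mul, mul_smul, Sylow.coe_subgroup_smul, map_conj_smul, Subgroup.subtype_apply]

variable [Finite G] [Fact p.Prime]

theorem commute_sylow (h : IsSSSupplement H K) (hH : IsPGroup p H) {q : ℕ} [Fact q.Prime]
    (hqp : q ≠ p) (Q : Sylow q G) : Commute (H : Set G) (Q : Set G) := by
  obtain ⟨n, hn⟩ := IsPGroup.iff_card.1 hH
  obtain ⟨Q₀⟩ : Nonempty (Sylow q K) := inferInstance
  have hq : q.Prime := Fact.out
  have hidx : ¬ q ∣ (Q₀.toSubgroup.map K.subtype).index := by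
    rw [Subgroup.index_map_subtype, hq.dvd_mul, not_or]
    refine ⟨Q₀.not_dvd_index, fun hdvd => hqp ?_⟩
    rw [← Nat.prime_dvd_prime_iff_eq hq Fact.out]
    exact hq.dvd_of_dvd_pow (hn ▸ hdvd.trans (index_dvd_card_of_mul_eq_univ h.1))
  obtain ⟨g, rfl⟩ := MulAction.exists_smul_eq G ((Q₀.2.map K.subtype).toSylow hidx) Q
  obtain ⟨a, ha, Q₁, hQ₁⟩ := h.exists_conj_smul_eq Q₀ g
  have hcomm := commute_conj_smul (h.2 q Q₁) ha
  rwa [← hQ₁] at hcomm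

theorem exists_sylow_eq_mul (h : IsSSSupplement H K) (hH : IsPGroup p H) (P : Sylow p K) :
    ∃ P' : Sylow p G,
      (P' : Set G) = (H : Set G) * ((P.toSubgroup.map K.subtype : Subgroup G) : Set G) := by
  have hcomm := h.2 p P
  obtain ⟨P', hP'⟩ := (isPGroup_sup_of_commute hH (P.2.map K.subtype) hcomm).exists_le_sylow
  have hHP : H ≤ P' := le_sup_left.trans hP'
  have hPK : P.toSubgroup.map K.subtype = (P' : Subgroup G) ⊓ K := by
    rw [← P.3 P'.2.comap_subtype (Subgroup.map_le_iff_le_comap.1 (le_sup_right.trans hP'))]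
    exact Subgroup.subgroupOf_map_subtype _ _
  refine ⟨P', ?_⟩
  rw [hPK, inf_comm, Subgroup.mul_inf_assoc H K P' hHP, h.1, Set.univ_inter]
  rfl

end IsSSSupplement

/-- `S` is a Sylow `p`-partner of `x`: the product of `⟨x⟩` with any conjugate of `S` is a Sylow
`p`-subgroup. For an SS-supplement `K` of `⟨x⟩`, the Sylow `p`-subgroups of `K` have this
property. -/
def IsSylowPartner {G : Type*} [Group G] (p : ℕ) (x : G) (S : Subgroup G) : Prop :=
  ∀ g : G, ∃ P : Sylow p G,
    (P : Set G) = (Subgroup.zpowers x : Set G) * ((MulAut.conj g • S : Subgroup G) : Set G)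

/-- The consequences of the SS-permutability of the cyclic primary subgroups that the structure
theory uses; they pass to quotients. -/
structure PrimaryPermuting (G : Type*) [Group G] : Prop where
  commute_sylow {p : ℕ} [Fact p.Prime] {x : G} (hx : IsPElement p x) {q : ℕ} [Fact q.Prime]
    (hqp : q ≠ p) (Q : Sylow q G) : Commute (Subgroup.zpowers x : Set G) (Q : Set G)
  exists_isSylowPartner {p : ℕ} [Fact p.Prime] {x : G} (hx : IsPElement p x) :
    ∃ S : Subgroup G, IsSylowPartner p x S

section PrimaryPermuting

variable {G : Type*} [Group G] {p : ℕ} {x : G} {S : Subgroup G}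

theorem IsSSSupplement.isSylowPartner [Finite G] [Fact p.Prime] {K : Subgroup G}
    (h : IsSSSupplement (Subgroup.zpowers x) K) (hx : IsPElement p x) (P : Sylow p K) :
    IsSylowPartner p x (P.toSubgroup.map K.subtype) := by
  intro g
  obtain ⟨a, ha, P', hP'⟩ := h.exists_conj_smul_eq P g
  obtain ⟨R, hR⟩ := h.exists_sylow_eq_mul hx.isPGroup_zpowers P'
  refine ⟨a • R, ?_⟩
  rw [hP', Sylow.coe_smul, hR, smul_mul', ← Subgroup.coe_pointwise_smul,
    Subgroup.conj_smul_eq_self_of_mem ha, Subgroup.coe_pointwise_smul]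

theorem primaryPermuting_of_isSSPermutable [Finite G]
    (h : ∀ H : Subgroup G, IsCyclic H → (∃ p k : ℕ, p.Prime ∧ Nat.card H = p ^ k) →
      IsSSPermutable H) : PrimaryPermuting G := by
  have hsupp {p : ℕ} [Fact p.Prime] {x : G} (hx : IsPElement p x) :
      IsSSPermutable (Subgroup.zpowers x) := by
    obtain ⟨n, hn⟩ := IsPGroup.iff_card.1 hx.isPGroup_zpowers
    exact h _ inferInstance ⟨p, n, Fact.out, hn⟩
  refine ⟨fun hx _ _ hqp Q => ?_, fun {p} _ _ hx => ?_⟩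
  · obtain ⟨K, hK⟩ := hsupp hx
    exact hK.commute_sylow hx.isPGroup_zpowers hqp Q
  · obtain ⟨K, hK⟩ := hsupp hx
    obtain ⟨P⟩ : Nonempty (Sylow p K) := inferInstance
    exact ⟨_, hK.isSylowPartner hx P⟩

namespace IsSylowPartner

theorem map [Finite G] [Fact p.Prime] {G' : Type*} [Group G'] (h : IsSylowPartner p x S)
    {f : G →* G'} (hf : Function.Surjective f) : IsSylowPartner p (f x) (S.map f) := by
  intro g'
  obtain ⟨g, rfl⟩ := hf g'
  obtain ⟨P, hP⟩ := h g
  refine ⟨P.mapSurjective hf, ?_⟩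
  rw [← map_conj_smul, ← MonoidHom.map_zpowers, Subgroup.coe_map, Subgroup.coe_map,
    ← Set.image_mul, ← hP]
  rfl

theorem isPGroup (h : IsSylowPartner p x S) : IsPGroup p S := by
  obtain ⟨P, hP⟩ := h 1
  rw [map_one, one_smul] at hP
  exact P.2.to_le (right_le_of_coe_eq_mul hP)

end IsSylowPartner

theorem PrimaryPermuting.of_surjective [Finite G] (h : PrimaryPermuting G) {G' : Type*} [Group G']
    {f : G →* G'} (hf : Function.Surjective f) : PrimaryPermuting G' := by
  have hlift {p : ℕ} [Fact p.Prime] {y : G'} (hy : IsPElement p y) :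
      ∃ x, f x = y ∧ IsPElement p x := by
    obtain ⟨g, rfl⟩ := hf y
    obtain ⟨x, -, hxg, hx⟩ := hy.exists_mem_zpowers_map_eq
    exact ⟨x, hxg, hx⟩
  refine ⟨fun hy q _ hqp Q => ?_, fun hy => ?_⟩
  · obtain ⟨x, rfl, hx⟩ := hlift hy
    obtain ⟨Q, rfl⟩ := Sylow.mapSurjective_surjective hf q Q
    have hQ := congrArg (f '' ·) (h.commute_sylow hx hqp Q).eq
    simp only [Set.image_mul, ← Subgroup.coe_map, MonoidHom.map_zpowers] at hQ
    exact hQ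
  · obtain ⟨x, rfl, hx⟩ := hlift hy
    obtain ⟨S, hS⟩ := h.exists_isSylowPartner hx
    exact ⟨S.map f, hS.map hf⟩

end PrimaryPermuting

section PrimeOrderNormal

variable {G : Type*} [Group G]

theorem commute_of_conj_mem {N P : Subgroup G} [hN : N.Normal] (hNP : Disjoint N P) {n s : G}
    (hn : n ∈ N) (hs : s ∈ P) (hns : n * s * n⁻¹ ∈ P) : Commute n s := by
  refine commutatorElement_eq_one_iff_commute.1
    (Subgroup.disjoint_def.1 hNP ?_ (mul_mem hns (inv_mem hs)))
  rw [commutatorElement_def, mul_assoc, mul_assoc, ← mul_assoc s]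
  exact mul_mem hn (hN.conj_mem _ (inv_mem hn) s)

theorem le_normalizer_of_commute {V Z R : Subgroup G} [hV : V.Normal] (hZV : Z ≤ V)
    (hVR : Disjoint V R) (h : Commute (Z : Set G) (R : Set G)) :
    R ≤ Subgroup.normalizer (Z : Set G) := by
  refine Subgroup.le_normalizer_iff.2 fun r hr z hz => ?_
  obtain ⟨z', hz', r', hr', hzr : z' * r' = r * z⟩ := h.symm.le (Set.mul_mem_mul hr hz)
  have hconj : r * z * r⁻¹ = z' * (r' * r⁻¹) := by rw [← hzr, mul_assoc]
  have hmem : r' * r⁻¹ ∈ V := by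
    rw [← inv_mul_cancel_left z' (r' * r⁻¹), ← hconj]
    exact mul_mem (inv_mem (hZV hz')) (hV.conj_mem z (hZV hz) r)
  rwa [hconj, Subgroup.disjoint_def.1 hVR hmem (mul_mem hr' (inv_mem hr)), mul_one]

theorem mem_centralizer_of_commute_of_card_eq_prime {q : ℕ} [Fact q.Prime] {N : Subgroup G}
    (hN : Nat.card N = q) {m x : G} (hm : m ∈ N) (hm1 : m ≠ 1) (hmx : Commute m x) :
    x ∈ Subgroup.centralizer (N : Set G) := by
  refine Subgroup.mem_centralizer_iff.2 fun n hn => ?_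
  obtain ⟨i, hi⟩ := mem_zpowers_of_prime_card hN (g := ⟨m, hm⟩) (g' := ⟨n, hn⟩)
    (mt (congrArg Subtype.val) hm1)
  rw [← show m ^ i = n from congrArg Subtype.val hi]
  exact hmx.zpow_left i

variable [Finite G]

theorem exists_mem_centralizer_sylow {q : ℕ} [Fact q.Prime] {V : Subgroup G} [V.Normal]
    (hV : IsPGroup q V) (hV1 : V ≠ ⊥) (Q : Sylow q G) :
    ∃ v ∈ V, v ≠ 1 ∧ v ∈ Subgroup.centralizer (Q : Set G) := by
  let _ : MulAction Q V :=
    MulAction.compHom V ((MulAut.conjNormal (H := V)).comp (Q : Subgroup G).subtype)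
  have hdvd : q ∣ Nat.card V := hV.card_eq_or_dvd.resolve_left (mt V.card_eq_one.1 hV1)
  have hone : (1 : V) ∈ MulAction.fixedPoints Q V := fun g => map_one (MulAut.conjNormal (g : G))
  obtain ⟨v, hv, hv1⟩ := Q.2.exists_fixed_point_of_prime_dvd_card_of_fixed_point V hdvd hone
  refine ⟨v, v.2, fun h => hv1 (Subtype.ext h.symm), Subgroup.mem_centralizer_iff.2 fun g hg => ?_⟩
  exact mul_inv_eq_iff_eq_mul.1 (congrArg Subtype.val (hv ⟨g, hg⟩))

theorem PrimaryPermuting.exists_normal_card_eq_prime (h : PrimaryPermuting G) {q : ℕ}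
    [Fact q.Prime] (hq : pCore q G ≠ ⊥) : ∃ N : Subgroup G, N.Normal ∧ Nat.card N = q := by
  obtain ⟨Q⟩ : Nonempty (Sylow q G) := inferInstance
  obtain ⟨v, hv, hv1, hvQ⟩ := exists_mem_centralizer_sylow isPGroup_pCore hq Q
  obtain ⟨z, hzv, hz⟩ :=
    (isPElement_of_mem_isPGroup isPGroup_pCore hv).exists_mem_zpowers_orderOf_eq hv1
  have hzq : IsPElement q z := isPElement_of_pow_eq_one (hz ▸ pow_orderOf_eq_one z)
  have hZV : Subgroup.zpowers z ≤ pCore q G :=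
    Subgroup.zpowers_le.2 (Subgroup.zpowers_le.2 hv hzv)
  have hZQ : Subgroup.zpowers z ≤ Subgroup.centralizer (Q : Set G) :=
    Subgroup.zpowers_le.2 (Subgroup.zpowers_le.2 hvQ hzv)
  refine ⟨Subgroup.zpowers z, ?_, by rw [Nat.card_zpowers, hz]⟩
  rw [← Subgroup.normalizer_eq_top_iff]
  refine eq_top_of_forall_exists_sylow_le fun r _ => ?_
  rcases eq_or_ne r q with rfl | hrq
  · exact ⟨Q, (Subgroup.le_centralizer_iff.1 hZQ).trans (Subgroup.centralizer_le_normalizer _)⟩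
  · obtain ⟨R⟩ : Nonempty (Sylow r G) := inferInstance
    exact ⟨R, le_normalizer_of_commute hZV (IsPGroup.disjoint_of_ne q r hrq.symm _ _
      isPGroup_pCore R.2) (h.commute_sylow hzq hrq R)⟩

variable {p : ℕ} [Fact p.Prime] {N : Subgroup G} [N.Normal]

theorem exists_mem_smul_sylow_eq_of_le_sup {P P' : Sylow p G} (h : (P' : Subgroup G) ≤ N ⊔ P) :
    ∃ m ∈ N, m • P = P' := by
  have hP : (P : Subgroup G) ≤ N ⊔ P := le_sup_right
  obtain ⟨⟨g, hg⟩, hgP⟩ := MulAction.exists_smul_eq (N ⊔ P : Subgroup G) (P.subtype hP)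
    (P'.subtype h)
  rw [Sylow.smul_subtype] at hgP
  obtain ⟨m, hm, u, hu, rfl⟩ := (Subgroup.normal_mul N (P : Subgroup G)).le hg
  have huP : u • P = P := Sylow.smul_eq_iff_mem_normalizer.2 (Subgroup.le_normalizer hu)
  have hmuP : (m * u) • P = P' := Sylow.subtype_injective hgP
  exact ⟨m, hm, by rw [← hmuP, mul_smul, huP]⟩

theorem IsSylowPartner.le_centralizer {q : ℕ} [Fact q.Prime] (hqp : q ≠ p)
    (hN : Nat.card N = q) {x : G} (hxN : x ∉ Subgroup.centralizer (N : Set G)) {S : Subgroup G}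
    (h : IsSylowPartner p x S) : S ≤ Subgroup.centralizer (N : Set G) := by
  obtain ⟨P, hP⟩ := h 1
  rw [map_one, one_smul] at hP
  have hxP := left_le_of_coe_eq_mul hP (Subgroup.mem_zpowers x)
  have hSP := right_le_of_coe_eq_mul hP
  have hNP : Disjoint N P :=
    IsPGroup.disjoint_of_ne q p hqp _ _ (IsPGroup.of_card (n := 1) (by rw [hN, pow_one])) P.2
  -- The Sylow subgroups `⟨x⟩S` and `⟨x⟩(nSn⁻¹)` are conjugate under some `m ∈ N`. Both contain
  -- `x`, so `m` commutes with `x`, which forces `m = 1`: thus `S` and `nSn⁻¹` lie in the same `P`.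
  refine fun s hs => Subgroup.mem_centralizer_iff.2 fun n hn => ?_
  obtain ⟨P', hP'⟩ := h n
  have hle : (P' : Subgroup G) ≤ N ⊔ P := by
    refine hP'.le.trans ?_
    rw [Set.mul_subset_iff]
    rintro a ha _ ⟨t, ht, rfl⟩
    have hn' : n ∈ N ⊔ (P : Subgroup G) := Subgroup.mem_sup_left hn
    exact mul_mem (Subgroup.mem_sup_right (Subgroup.zpowers_le.2 hxP ha))
      (mul_mem (mul_mem hn' (Subgroup.mem_sup_right (hSP ht))) (inv_mem hn'))
  obtain ⟨m, hm, rfl⟩ := exists_mem_smul_sylow_eq_of_le_sup hle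
  have hmx : m⁻¹ * x * m⁻¹⁻¹ ∈ (P : Subgroup G) := by
    have hx := left_le_of_coe_eq_mul hP' (Subgroup.mem_zpowers x)
    rwa [Sylow.coe_subgroup_smul, Subgroup.mem_pointwise_smul_iff_inv_smul_mem, ← map_inv,
      MulAut.smul_def, MulAut.conj_apply] at hx
  have hm1 : m = 1 := by
    by_contra hm1
    exact hxN (mem_centralizer_of_commute_of_card_eq_prime hN (inv_mem hm)
      (inv_ne_one.2 hm1) (commute_of_conj_mem hNP (inv_mem hm) hxP hmx))
  subst hm1
  rw [one_smul] at hP'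
  exact commute_of_conj_mem hNP hn (hSP hs) (right_le_of_coe_eq_mul hP' ⟨s, hs, rfl⟩)

end PrimeOrderNormal

section Centralizer

variable {G : Type*} [Group G] {p : ℕ}

theorem mem_sylow_of_mem_centralizer {P : Sylow p G} {x : G} (hx : IsPElement p x)
    (hxP : x ∈ Subgroup.centralizer (P : Set G)) : x ∈ P := by
  have hxn : x ∈ Subgroup.zpowers x ⊓ Subgroup.normalizer (P : Set G) :=
    ⟨Subgroup.mem_zpowers x, Subgroup.centralizer_le_normalizer _ hxP⟩
  rw [hx.isPGroup_zpowers.inf_normalizer_sylow P] at hxn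
  exact hxn.2

section Partner

variable {C : Subgroup G} {x y : G}

theorem mem_of_coe_sylow_eq_zpowers_mul (hx : IsPElement p x) (hyx : orderOf y ∣ orderOf x)
    (hy : y ∈ C) (hxC : Disjoint (Subgroup.zpowers x) C)
    (hcomm : ∀ s ∈ C, IsPElement p s → Commute x s) {T : Subgroup G} (hTC : T ≤ C)
    {P : Sylow p G} (hP : (P : Set G) = (Subgroup.zpowers (x * y) : Set G) * (T : Set G)) :
    y ∈ T := by
  have hxy : Commute x y := hcomm y hy <| hx.imp fun _ hk =>
    orderOf_dvd_iff_pow_eq_one.1 (hyx.trans (orderOf_dvd_of_pow_eq_one hk))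
  -- `x` centralizes `P`, hence lies in it; therefore so does `y`.
  have hxP : x ∈ P := by
    refine mem_sylow_of_mem_centralizer hx (Subgroup.mem_centralizer_iff.2 fun u hu => ?_)
    obtain ⟨_, ⟨i, rfl⟩, s, hs, rfl⟩ := hP.le hu
    have hsP : s ∈ (P : Subgroup G) := right_le_of_coe_eq_mul hP hs
    exact ((((Commute.refl x).mul_right hxy).zpow_right i).mul_right
      (hcomm s (hTC hs) (isPElement_of_mem_isPGroup P.2 hsP))).symm.eq
  have hyP : y ∈ (P : Subgroup G) := by
    rw [← inv_mul_cancel_left x y]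
    exact mul_mem (inv_mem hxP) (left_le_of_coe_eq_mul hP (Subgroup.mem_zpowers _))
  obtain ⟨_, ⟨i, rfl⟩, s, hs, hys : (x * y) ^ i * s = y⟩ := hP.le hyP
  rw [hxy.mul_zpow] at hys
  have hxi : x ^ i = 1 := by
    refine Subgroup.disjoint_def.1 hxC (Subgroup.zpow_mem_zpowers x i) ?_
    rw [eq_mul_inv_of_mul_eq (eq_mul_inv_of_mul_eq hys)]
    exact mul_mem (mul_mem hy (inv_mem (hTC hs))) (inv_mem (zpow_mem hy i))
  have hyi : y ^ i = 1 := by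
    rw [← orderOf_dvd_iff_zpow_eq_one] at hxi ⊢
    exact (Int.natCast_dvd_natCast.2 hyx).trans hxi
  rw [hxi, hyi, one_mul, one_mul] at hys
  exact hys ▸ hs

theorem IsSylowPartner.mem_pCore [hC : C.Normal] (hx : IsPElement p x)
    (hyx : orderOf y ∣ orderOf x) (hy : y ∈ C) (hxC : Disjoint (Subgroup.zpowers x) C)
    (hcomm : ∀ s ∈ C, IsPElement p s → Commute x s) {S : Subgroup G} (hSC : S ≤ C)
    (hS : IsSylowPartner p (x * y) S) : y ∈ pCore p G := by
  refine le_pCore (hS.isPGroup.to_le S.normalCore_le) fun g => ?_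
  obtain ⟨P, hP⟩ := hS g⁻¹
  have hgC : MulAut.conj g⁻¹ • S ≤ C := by
    rintro _ ⟨s, hs, rfl⟩
    exact hC.conj_mem s (hSC hs) g⁻¹
  have hgS := mem_of_coe_sylow_eq_zpowers_mul hx hyx hy hxC hcomm hgC hP
  rwa [Subgroup.mem_pointwise_smul_iff_inv_smul_mem, ← map_inv, inv_inv] at hgS

end Partner

variable [Finite G] [Fact p.Prime]

theorem PrimaryPermuting.eq_one_of_mem_centralizer (h : PrimaryPermuting G)
    (hG : pCore p G = ⊥) {q : ℕ} [Fact q.Prime] (hqp : q ≠ p) {N : Subgroup G} [N.Normal]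
    (hN : Nat.card N = q) {x : G} (hx : orderOf x = p) (hxN : (x : G ⧸ N) ∈ pCore p (G ⧸ N))
    {y : G} (hy : IsPElement p y) (hyN : y ∈ Subgroup.centralizer (N : Set G)) : y = 1 := by
  by_contra hy1
  obtain ⟨w, hwy, hw⟩ := hy.exists_mem_zpowers_orderOf_eq hy1
  have hwN := Subgroup.zpowers_le.2 hyN hwy
  have hxp : IsPElement p x := isPElement_of_pow_eq_one (hx ▸ pow_orderOf_eq_one x)
  have hxC : Disjoint (Subgroup.zpowers x) (Subgroup.centralizer (N : Set G)) := by
    refine Subgroup.disjoint_def.2 ?_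
    rintro _ ⟨i, rfl⟩ hiN
    have hi := mem_pCore_of_mem_centralizer
      (hxp.of_mem_zpowers (Subgroup.zpow_mem_zpowers x i)) hiN (zpow_mem hxN i)
    rwa [hG, Subgroup.mem_bot] at hi
  have hNq : IsPGroup q N := IsPGroup.of_card (n := 1) (by rw [hN, pow_one])
  have hcomm : ∀ s ∈ Subgroup.centralizer (N : Set G), IsPElement p s → Commute x s :=
    fun s hsN hs => commute_of_mem_centralizer hqp.symm hG hNq hxN hs hsN
  have hp : p.Prime := Fact.out
  have hxw : x * w ∉ Subgroup.centralizer (N : Set G) := fun hxw => hp.ne_one <| by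
    rw [← hx, Subgroup.disjoint_def.1 hxC (Subgroup.mem_zpowers x)
      ((Subgroup.mul_mem_cancel_right _ hwN).1 hxw), orderOf_one]
  have hwp := hy.of_mem_zpowers hwy
  obtain ⟨S, hS⟩ := h.exists_isSylowPartner (hxp.mul_of_commute hwp (hcomm w hwN hwp))
  have hw1 := IsSylowPartner.mem_pCore hxp (hw.trans hx.symm).dvd hwN hxC hcomm
    (hS.le_centralizer hqp hN hxw) hS
  rw [hG, Subgroup.mem_bot] at hw1
  exact hp.ne_one (by rw [← hw, hw1, orderOf_one])

end Centralizer

section AlmostPClosed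

variable {G : Type*} [Group G]

/-- `G` is almost `p`-closed: it has a normal subgroup of index `1` or `p` that is `p`-closed,
that is, whose `p`-elements form a normal subgroup. -/
def IsAlmostPClosed (p : ℕ) (G : Type*) [Group G] : Prop :=
  ∃ K : Subgroup G, K.Normal ∧ K.index ∣ p ∧ ∀ x ∈ K, IsPElement p x → x ∈ pCore p G

theorem IsAlmostPClosed.of_quotient {p : ℕ} {V : Subgroup G} [V.Normal]
    (hV : ∀ x : G, IsPElement p x → (x : G ⧸ V) ∈ pCore p (G ⧸ V) → x ∈ pCore p G)
    (h : IsAlmostPClosed p (G ⧸ V)) : IsAlmostPClosed p G := by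
  obtain ⟨K, hKn, hKi, hK⟩ := h
  refine ⟨K.comap (QuotientGroup.mk' V), inferInstance, ?_, fun x hxK hx => ?_⟩
  · rwa [Subgroup.index_comap_of_surjective _ (QuotientGroup.mk'_surjective V)]
  · exact hV x hx (hK _ hxK (hx.map (QuotientGroup.mk' V)))

theorem exists_monoidHom_ker_eq_centralizer (N : Subgroup G) [N.Normal] [IsCyclic N] :
    ∃ ψ : G →* (ZMod (Nat.card N))ˣ, ψ.ker = Subgroup.centralizer (N : Set G) := by
  refine ⟨(IsCyclic.mulAutMulEquiv N).toMonoidHom.comp MulAut.conjNormal, ?_⟩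
  ext g
  rw [MonoidHom.mem_ker, Subgroup.mem_centralizer_iff]
  change IsCyclic.mulAutMulEquiv N (MulAut.conjNormal g) = 1 ↔ _
  rw [map_eq_one_iff _ (IsCyclic.mulAutMulEquiv N).injective]
  refine ⟨fun hg n hn => ?_, fun hg => ?_⟩
  · have hgn : g * n * g⁻¹ = n := congrArg Subtype.val (DFunLike.congr_fun hg (⟨n, hn⟩ : N))
    exact (mul_inv_eq_iff_eq_mul.1 hgn).symm
  · ext n
    exact mul_inv_eq_iff_eq_mul.2 (hg n n.2).symm

variable [Finite G] {p : ℕ} [Fact p.Prime]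

theorem exists_normal_index_eq_of_card_map_eq {A : Type*} [CommGroup A] {φ : G →* A}
    {P : Sylow p G} (hP : Nat.card (P.toSubgroup.map φ) = p) :
    ∃ K : Subgroup G, K.Normal ∧ K.index = p ∧ ∀ y ∈ K, IsPElement p y → y ∈ φ.ker := by
  let R : Sylow p φ.range := P.mapSurjective φ.rangeRestrict_surjective
  have hR : Nat.card R = p := by
    refine (Subgroup.card_map_of_injective φ.range.subtype_injective).symm.trans ?_
    rwa [Sylow.coe_mapSurjective, Subgroup.map_map]
  have : Finite φ.range := Finite.of_surjective _ φ.rangeRestrict_surjective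
  obtain ⟨B, hB⟩ := Subgroup.exists_right_complement'_of_coprime R.card_coprime_index
  refine ⟨B.comap φ.rangeRestrict, inferInstance, ?_, fun y hyB hy => ?_⟩
  · rw [Subgroup.index_comap_of_surjective _ φ.rangeRestrict_surjective, hB.index_eq_card, hR]
  · rw [← MonoidHom.ker_rangeRestrict]
    refine Subgroup.disjoint_def.1 hB.disjoint ?_ hyB
    exact (hy.map φ.rangeRestrict).isPGroup_zpowers.le_sylow_of_normal R (Subgroup.mem_zpowers _)

theorem PrimaryPermuting.isAlmostPClosed_of_mk_mem_pCore (h : PrimaryPermuting G)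
    (hG : pCore p G = ⊥) {q : ℕ} [Fact q.Prime] (hqp : q ≠ p) {N : Subgroup G} [N.Normal]
    (hN : Nat.card N = q) {x : G} (hx : orderOf x = p)
    (hxN : (x : G ⧸ N) ∈ pCore p (G ⧸ N)) : IsAlmostPClosed p G := by
  have hp : p.Prime := Fact.out
  have hxp : IsPElement p x := isPElement_of_pow_eq_one (hx ▸ pow_orderOf_eq_one x)
  have hxC : x ∉ Subgroup.centralizer (N : Set G) := fun hxC => hp.ne_one <| by
    rw [← hx, h.eq_one_of_mem_centralizer hG hqp hN hx hxN hxp hxC, orderOf_one]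
  obtain ⟨S, hS⟩ := h.exists_isSylowPartner hxp
  have hSC := hS.le_centralizer hqp hN hxC
  obtain ⟨P, hP⟩ := hS 1
  rw [map_one, one_smul] at hP
  have : IsCyclic N := isCyclic_of_prime_card hN
  obtain ⟨ψ, hψ⟩ := exists_monoidHom_ker_eq_centralizer N
  have hmap : P.toSubgroup.map ψ = Subgroup.zpowers (ψ x) := by
    have hPS : P.toSubgroup ≤ Subgroup.zpowers x ⊔ S :=
      hP.le.trans (Set.mul_subset_iff.2 fun a ha s hs => Subgroup.mul_mem_sup ha hs)
    have hSbot : S.map ψ = ⊥ := (Subgroup.map_eq_bot_iff S).2 (hψ ▸ hSC)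
    refine le_antisymm ((Subgroup.map_mono hPS).trans ?_) ?_
    · rw [Subgroup.map_sup, hSbot, sup_bot_eq, MonoidHom.map_zpowers]
    · rw [← MonoidHom.map_zpowers]
      exact Subgroup.map_mono (left_le_of_coe_eq_mul hP)
  have hcard : Nat.card (P.toSubgroup.map ψ) = p := by
    rw [hmap, Nat.card_zpowers]
    refine orderOf_eq_prime (by rw [← map_pow, ← hx, pow_orderOf_eq_one, map_one]) ?_
    rwa [Ne, ← MonoidHom.mem_ker, hψ]
  obtain ⟨K, hKn, hKi, hK⟩ := exists_normal_index_eq_of_card_map_eq hcard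
  refine ⟨K, hKn, hKi.dvd, fun y hyK hy => ?_⟩
  rw [h.eq_one_of_mem_centralizer hG hqp hN hx hxN hy (hψ ▸ hK y hyK hy)]
  exact one_mem _

theorem PrimaryPermuting.isAlmostPClosed [Group.IsSolvable G] (h : PrimaryPermuting G) :
    IsAlmostPClosed p G := by
  induction hc : Nat.card G using Nat.strong_induction_on generalizing G with
  | _ n ih =>
  subst hc
  have hquot : ∀ (N : Subgroup G) [N.Normal], N ≠ ⊥ → IsAlmostPClosed p (G ⧸ N) := by
    intro N _ hN
    refine ih _ ?_ (h.of_surjective (QuotientGroup.mk'_surjective N)) rfl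
    rw [← Subgroup.index, ← N.card_mul_index]
    exact lt_mul_of_one_lt_left (Nat.pos_of_ne_zero N.index_ne_zero_of_finite)
      (N.one_lt_card_iff_ne_bot.2 hN)
  by_cases hG : pCore p G = ⊥
  · rcases subsingleton_or_nontrivial G with hG₁ | hG₁
    · refine ⟨⊤, inferInstance, by simp, fun x _ _ => ?_⟩
      rw [Subsingleton.elim x 1]
      exact one_mem _
    obtain ⟨q, hq, hqG⟩ := exists_pCore_ne_bot (G := G)
    have : Fact q.Prime := ⟨hq⟩
    have hqp : q ≠ p := fun hqp => hqG (hqp ▸ hG)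
    obtain ⟨N, hNn, hN⟩ := h.exists_normal_card_eq_prime hqG
    by_cases hTp : ∃ x : G, orderOf x = p ∧ (x : G ⧸ N) ∈ pCore p (G ⧸ N)
    · obtain ⟨x, hx, hxN⟩ := hTp
      exact h.isAlmostPClosed_of_mk_mem_pCore hG hqp hN hx hxN
    · have hN1 : N ≠ ⊥ := fun hN1 => hq.ne_one (by rw [← hN, hN1, Subgroup.card_bot])
      refine (hquot N hN1).of_quotient fun w hw hwN => ?_
      by_contra hw1
      obtain ⟨x, hxw, hx⟩ := hw.exists_mem_zpowers_orderOf_eq (fun h1 => hw1 (h1 ▸ one_mem _))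
      obtain ⟨i, rfl⟩ := hxw
      exact hTp ⟨_, hx, zpow_mem hwN i⟩
  · exact (hquot _ hG).of_quotient fun x _ hx =>
      comap_pCore_quotient_le isPGroup_pCore hx

end AlmostPClosed

section Supplements

variable {G : Type*} [Group G]

theorem exists_zpow_mul_mem_of_notMem {p : ℕ} [Fact p.Prime] {K : Subgroup G} [K.Normal]
    (hK : K.index ∣ p) {x : G} (hx : x ∉ K) (u : G) : ∃ i : ℤ, (x ^ i)⁻¹ * u ∈ K := by
  have hcard : Nat.card (G ⧸ K) = p :=
    ((Nat.dvd_prime Fact.out).1 hK).resolve_left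
      fun h1 => hx (Subgroup.index_eq_one.1 h1 ▸ Subgroup.mem_top x)
  obtain ⟨i, hi⟩ := mem_zpowers_of_prime_card hcard (g := (x : G ⧸ K)) (g' := (u : G ⧸ K))
    (mt (QuotientGroup.eq_one_iff x).1 hx)
  exact ⟨i, QuotientGroup.eq.1 hi⟩

theorem map_subtype_sylow_eq_pCore_inf {p : ℕ} {L : Subgroup G}
    (hL : ∀ x ∈ L, IsPElement p x → x ∈ pCore p G) (P : Sylow p L) :
    P.toSubgroup.map L.subtype = pCore p G ⊓ L := by
  rw [← P.3 (isPGroup_pCore.comap_subtype : IsPGroup p ((pCore p G).subgroupOf L))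
    fun u hu => hL u u.2 ((isPElement_of_mem_isPGroup P.2 hu).map L.subtype)]
  exact Subgroup.subgroupOf_map_subtype _ _

theorem exists_sylow_eq_map_subtype [Finite G] {p : ℕ} [Fact p.Prime] {L : Subgroup G}
    {P₀ : Sylow p G} (hP₀ : (P₀ : Subgroup G) ≤ L) (P : Sylow p L) :
    ∃ Q : Sylow p G, Q.toSubgroup = P.toSubgroup.map L.subtype := by
  have hidx : ¬ p ∣ (P.toSubgroup.map L.subtype).index := by
    rw [Subgroup.index_map_subtype, Nat.Prime.dvd_mul Fact.out, not_or]
    exact ⟨P.not_dvd_index,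
      fun hdvd => P₀.not_dvd_index (hdvd.trans (Subgroup.index_dvd_of_le hP₀))⟩
  exact ⟨(P.2.map L.subtype).toSylow hidx, rfl⟩

theorem PrimaryPermuting.commute_sylow_of_le_pCore [Finite G] (h : PrimaryPermuting G) {p : ℕ}
    [Fact p.Prime] {H : Subgroup G} (hH : ∀ x ∈ H, IsPElement p x → x ∈ pCore p G)
    (Q : Sylow p G) : Commute (H : Set G) (Q : Set G) := by
  refine commute_of_forall_isPElement fun q _ x hxH hx => ?_
  rcases eq_or_ne p q with rfl | hpq
  · exact commute_of_le (Subgroup.zpowers_le.2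
      (isPGroup_pCore.le_sylow_of_normal Q (hH x hxH hx)))
  · exact h.commute_sylow hx hpq Q

/-- For a family `K` of subgroups indexed by the primes, the intersection of those `K p` that do
not contain `H`. If `K p` is normal of index `1` or `p`, this is a normal supplement of `H`. -/
def iInfNotGe (K : Nat.Primes → Subgroup G) (H : Subgroup G) : Subgroup G :=
  ⨅ p : {p : Nat.Primes // ¬ H ≤ K p}, K p

variable {K : Nat.Primes → Subgroup G} {H : Subgroup G}

theorem iInfNotGe_le {p : Nat.Primes} (h : ¬ H ≤ K p) : iInfNotGe K H ≤ K p :=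
  iInf_le (fun p : {p : Nat.Primes // ¬ H ≤ K p} => K p) ⟨p, h⟩

variable [hKn : ∀ p, (K p).Normal]

instance iInfNotGe_normal : (iInfNotGe K H).Normal :=
  Subgroup.normal_iInf_normal fun p => hKn p

theorem IsPElement.mem_iInfNotGe (hK : ∀ p, (K p).index ∣ p) {p : Nat.Primes} {x : G}
    (hx : IsPElement p x) (hxK : ¬ H ≤ K p → x ∈ K p) : x ∈ iInfNotGe K H := by
  refine Subgroup.mem_iInf.2 fun ⟨q, hq⟩ => ?_
  rcases eq_or_ne p q with rfl | hpq
  · exact hxK hq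
  · have : Fact (p : ℕ).Prime := ⟨p.2⟩
    have : Fact (q : ℕ).Prime := ⟨q.2⟩
    exact hx.mem_of_index_dvd (fun h => hpq (Subtype.ext h)) (hK q)

theorem sylow_le_iInfNotGe (hK : ∀ p, (K p).index ∣ p) {p : Nat.Primes} (hH : H ≤ K p)
    (P : Sylow p G) : (P : Subgroup G) ≤ iInfNotGe K H := fun _ hu =>
  (isPElement_of_mem_isPGroup P.2 hu).mem_iInfNotGe hK fun hn => absurd hH hn

variable [Finite G]

theorem sup_iInfNotGe_eq_top (hK : ∀ p, (K p).index ∣ p) : H ⊔ iInfNotGe K H = ⊤ := by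
  refine eq_top_of_forall_exists_sylow_le fun p hp => ?_
  let p' : Nat.Primes := ⟨p, hp.out⟩
  by_cases hH : H ≤ K p'
  · obtain ⟨P⟩ : Nonempty (Sylow p G) := inferInstance
    exact ⟨P, (sylow_le_iInfNotGe hK hH P).trans le_sup_right⟩
  · obtain ⟨x, hxH, hx, hxK⟩ := exists_isPElement_mem_notMem (hK p') hH
    obtain ⟨P, hP⟩ := hx.isPGroup_zpowers.exists_le_sylow
    refine ⟨P, fun u hu => ?_⟩
    obtain ⟨i, hi⟩ := exists_zpow_mul_mem_of_notMem (hK p') hxK u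
    have hxu : (x ^ i)⁻¹ * u ∈ (P : Subgroup G) :=
      mul_mem (inv_mem (hP (Subgroup.zpow_mem_zpowers x i))) hu
    rw [← mul_inv_cancel_left (x ^ i) u]
    exact Subgroup.mul_mem_sup (H.zpow_mem hxH i)
      ((isPElement_of_mem_isPGroup P.2 hxu).mem_iInfNotGe hK fun _ => hi)

theorem PrimaryPermuting.isSSSupplement_iInfNotGe (h : PrimaryPermuting G)
    (hK : ∀ p, (K p).index ∣ p)
    (hcore : ∀ p : Nat.Primes, ∀ x ∈ K p, IsPElement p x → x ∈ pCore p G) :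
    IsSSSupplement H (iInfNotGe K H) := by
  refine ⟨?_, fun p hp P => ?_⟩
  · rw [← Subgroup.mul_normal, sup_iInfNotGe_eq_top hK, Subgroup.coe_top]
  let p' : Nat.Primes := ⟨p, hp.out⟩
  by_cases hH : H ≤ K p'
  · obtain ⟨P₀⟩ : Nonempty (Sylow p G) := inferInstance
    obtain ⟨Q, hQ⟩ := exists_sylow_eq_map_subtype (sylow_le_iInfNotGe (p := p') hK hH P₀) P
    rw [← hQ]
    exact h.commute_sylow_of_le_pCore (fun x hxH => hcore p' x (hH hxH)) Q
  · rw [map_subtype_sylow_eq_pCore_inf (fun x hx => hcore p' x (iInfNotGe_le hH hx)) P]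
    exact Subgroup.set_mul_normal_comm _ _

theorem PrimaryPermuting.isNSSPermutable [Group.IsSolvable G] (h : PrimaryPermuting G)
    (H : Subgroup G) : IsNSSPermutable H := by
  have hclosed (p : Nat.Primes) : IsAlmostPClosed p G :=
    have : Fact (p : ℕ).Prime := ⟨p.2⟩
    h.isAlmostPClosed
  choose K hKn hKi hcore using hclosed
  exact ⟨iInfNotGe K H, inferInstance, h.isSSSupplement_iInfNotGe hKi hcore⟩

end Supplements

/-- Theorem D. -/
theorem theoremD {G : Type*} [Group G] [Finite G] (hsol : IsSolvable G) :
    List.TFAE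
      [IsSSTGroup G,
       IsNSSTGroup G,
       ∀ H : Subgroup G, IsSSPermutable H,
       ∀ H : Subgroup G, IsNSSPermutable H,
       ∀ H : Subgroup G, (∃ p k : ℕ, p.Prime ∧ Nat.card H = p ^ k) → IsSSPermutable H,
       ∀ H : Subgroup G, (∃ p k : ℕ, p.Prime ∧ Nat.card H = p ^ k) → IsNSSPermutable H,
       ∀ H : Subgroup G, IsCyclic H → (∃ p k : ℕ, p.Prime ∧ Nat.card H = p ^ k) →
         IsSSPermutable H,
       ∀ H : Subgroup G, IsCyclic H → (∃ p k : ℕ, p.Prime ∧ Nat.card H = p ^ k) →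
         IsNSSPermutable H] := by
  have : Group.IsSolvable G := hsol
  tfae_have 1 → 3 := fun h => h.isSSPermutable
  tfae_have 2 → 4 := fun h => h.isNSSPermutable
  tfae_have 3 → 1 := fun h H _ _ _ _ => h H
  tfae_have 4 → 2 := fun h H _ _ _ _ => h H
  tfae_have 3 → 5 := fun h H _ => h H
  tfae_have 5 → 7 := fun h H _ => h H
  tfae_have 4 → 3 := fun h H => (h H).isSSPermutable
  tfae_have 4 → 6 := fun h H _ => h H
  tfae_have 6 → 8 := fun h H _ => h H
  tfae_have 8 → 7 := fun h H hc hp => (h H hc hp).isSSPermutable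
  tfae_have 7 → 4 := fun h => (primaryPermuting_of_isSSPermutable h).isNSSPermutable
  tfae_finish
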